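/- (Linearity of the reward program transformation.) Let S be a pGCL program and let f : ℝ≥0∞ → ℝ≥0∞ be monotone. Then for all α, β ∈ ℝ≥0, wp[T_{α·f+β}(S)](0) = α·wp[T_f(S)](0) + β. -/

import Mathlib

open ENNReal

/-- Program states: maps from variables to extended non-negative reals. -/
abbrev PState (V : Type) := V → ℝ≥0∞

/-- Expectations: maps from states to extended non-negative reals. -/
abbrev Expct (V : Type) := PState V → ℝ≥0∞

/-- Syntax of pGCL programs. -/
inductive pGCL (V : Type) : Type 1
  | skip : pGCL V
  | assign : V → Expct V → pGCL V
  | reward : Expct V → pGCL V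
  | seq : pGCL V → pGCL V → pGCL V
  | prob : (p : ℝ≥0∞) → p ≤ 1 → pGCL V → pGCL V → pGCL V
  | ifte : (PState V → Bool) → pGCL V → pGCL V → pGCL V
  | loop : (PState V → Bool) → pGCL V → pGCL V

variable {V : Type} [DecidableEq V]

/-- The weakest pre-expectation transformer, bundled as an order hom. -/
noncomputable def wpHom : pGCL V → (Expct V →o Expct V)
  | .skip => OrderHom.id
  | .assign x e => ⟨fun X σ => X (Function.update σ x (e σ)), fun _ _ h σ => h _⟩
  | .reward e => ⟨fun X σ => e σ + X σ, fun _ _ h σ => add_le_add_right (h σ) _⟩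
  | .seq S₁ S₂ => (wpHom S₁).comp (wpHom S₂)
  | .prob p _ S₁ S₂ =>
      ⟨fun X σ => p * wpHom S₁ X σ + (1 - p) * wpHom S₂ X σ, by
        intro X Y h σ
        exact add_le_add (mul_le_mul_right ((wpHom S₁).monotone h σ) p)
          (mul_le_mul_right ((wpHom S₂).monotone h σ) (1 - p))⟩
  | .ifte b S₁ S₂ =>
      ⟨fun X σ => if b σ then wpHom S₁ X σ else wpHom S₂ X σ, by
        intro X Y h σ
        dsimp only
        split
        · exact (wpHom S₁).monotone h σ
        · exact (wpHom S₂).monotone h σ⟩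
  | .loop b S =>
      ⟨fun X => OrderHom.lfp
        ⟨fun Y σ => if b σ then wpHom S Y σ else X σ, by
          intro Y₁ Y₂ h σ
          dsimp only
          split
          · exact (wpHom S).monotone h σ
          · exact le_rfl⟩, by
        intro X₁ X₂ h
        apply OrderHom.lfp_le
        have := OrderHom.map_lfp
          (⟨fun Y σ => if b σ then wpHom S Y σ else X₂ σ, by
            intro Y₁ Y₂ h σ
            dsimp only
            split
            · exact (wpHom S).monotone h σ
            · exact le_rfl⟩ : Expct V →o Expct V)
        refine le_trans (fun σ => ?_) (le_of_eq this)
        change (if b σ then wpHom S _ σ else X₁ σ) ≤ (if b σ then wpHom S _ σ else X₂ σ)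
        split
        · exact le_rfl
        · exact h σ⟩

/-- The weakest pre-expectation `wp[S](X)`. -/
noncomputable def wp (S : pGCL V) (X : Expct V) : Expct V := wpHom S X

/-- An expression does not depend on variable `τ`. -/
def UnusedE (τ : V) (e : Expct V) : Prop := ∀ σ v, e (Function.update σ τ v) = e σ

/-- A Boolean guard does not depend on variable `τ`. -/
def UnusedB (τ : V) (b : PState V → Bool) : Prop := ∀ σ v, b (Function.update σ τ v) = b σ

/-- Variable `τ` does not occur in the program `S`. -/
def NotOccurs (τ : V) : pGCL V → Prop
  | .skip => True
  | .assign x e => x ≠ τ ∧ UnusedE τ e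
  | .reward e => UnusedE τ e
  | .seq S₁ S₂ => NotOccurs τ S₁ ∧ NotOccurs τ S₂
  | .prob _ _ S₁ S₂ => NotOccurs τ S₁ ∧ NotOccurs τ S₂
  | .ifte b S₁ S₂ => UnusedB τ b ∧ NotOccurs τ S₁ ∧ NotOccurs τ S₂
  | .loop b S => UnusedB τ b ∧ NotOccurs τ S

/-- Auxiliary reward transformation `T'_f` with ghost variable `τ`:
replaces `reward(e)` by `reward(f(τ+e) − f(τ)); τ := τ + e`. -/
noncomputable def Taux (τ : V) (f : ℝ≥0∞ → ℝ≥0∞) : pGCL V → pGCL V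
  | .reward e =>
      .seq (.reward fun σ => f (σ τ + e σ) - f (σ τ)) (.assign τ (fun σ => σ τ + e σ))
  | .seq S₁ S₂ => .seq (Taux τ f S₁) (Taux τ f S₂)
  | .prob p hp S₁ S₂ => .prob p hp (Taux τ f S₁) (Taux τ f S₂)
  | .ifte b S₁ S₂ => .ifte b (Taux τ f S₁) (Taux τ f S₂)
  | .loop b S => .loop b (Taux τ f S)
  | .skip => .skip
  | .assign x e => .assign x e

/-- Full reward transformation `T_f(S) = τ := 0; reward(f(0)); T'_f(S)`. -/
noncomputable def Tfull (τ : V) (f : ℝ≥0∞ → ℝ≥0∞) (S : pGCL V) : pGCL V :=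
  .seq (.assign τ (fun _ => 0)) (.seq (.reward fun _ => f 0) (Taux τ f S))


theorem wpHom_assign_apply (x : V) (e X : Expct V) (σ : PState V) :
    wpHom (.assign x e) X σ = X (Function.update σ x (e σ)) := by
  rw [wpHom]; rfl

theorem wpHom_reward_apply (e X : Expct V) (σ : PState V) :
    wpHom (.reward e) X σ = e σ + X σ := by
  rw [wpHom]; rfl

theorem wpHom_seq_apply (S₁ S₂ : pGCL V) (X : Expct V) :
    wpHom (.seq S₁ S₂) X = wpHom S₁ (wpHom S₂ X) := by
  rw [wpHom]; rfl

theorem wpHom_prob_apply (p : ℝ≥0∞) (hp : p ≤ 1) (S₁ S₂ : pGCL V) (X : Expct V)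
    (σ : PState V) :
    wpHom (.prob p hp S₁ S₂) X σ = p * wpHom S₁ X σ + (1 - p) * wpHom S₂ X σ := by
  rw [wpHom]; rfl

theorem wpHom_ifte_apply (b : PState V → Bool) (S₁ S₂ : pGCL V) (X : Expct V)
    (σ : PState V) :
    wpHom (.ifte b S₁ S₂) X σ = if b σ then wpHom S₁ X σ else wpHom S₂ X σ := by
  rw [wpHom]; rfl

/-- Unfolding equation of the loop. -/
theorem wpHom_loop_unfold (b : PState V → Bool) (S : pGCL V) (X : Expct V) (σ : PState V) :
    wpHom (.loop b S) X σ = if b σ then wpHom S (wpHom (.loop b S) X) σ else X σ := by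
  conv_lhs => rw [wpHom]
  have h := OrderHom.map_lfp
    (⟨fun Y σ => if b σ then wpHom S Y σ else X σ, by
      intro Y₁ Y₂ h σ
      dsimp only
      split
      · exact (wpHom S).monotone h σ
      · exact le_rfl⟩ : Expct V →o Expct V)
  have h2 := congrFun h σ
  refine h2.symm.trans ?_
  simp only [wpHom]
  rfl

/-- Park induction for the loop. -/
theorem wpHom_loop_le (b : PState V → Bool) (S : pGCL V) (X Y : Expct V)
    (h : ∀ σ, (if b σ then wpHom S Y σ else X σ) ≤ Y σ) :
    wpHom (.loop b S) X ≤ Y := by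
  rw [wpHom]
  exact OrderHom.lfp_le _ h

theorem linear_diff (α β : NNReal) (a b : ℝ≥0∞) :
    (α * a + β : ℝ≥0∞) - (α * b + β) = α * (a - b) := by
  rw [ENNReal.mul_sub (fun _ _ => ENNReal.coe_ne_top)]
  exact ENNReal.add_sub_add_eq_sub_right ENNReal.coe_ne_top

/-- Homogeneity of the auxiliary transformation. -/
theorem wpHom_Taux_linear (τ : V) (f : ℝ≥0∞ → ℝ≥0∞) (α β : NNReal) (S : pGCL V) :
    ∀ X : Expct V, wpHom (Taux τ (fun x => α * f x + β) S) (fun σ => α * X σ)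
      = fun σ => α * wpHom (Taux τ f S) X σ := by
  induction S with
  | skip => intro X; rfl
  | assign x e => intro X; rfl
  | reward e =>
    intro X
    funext σ
    simp only [Taux, wpHom_assign_apply, wpHom_reward_apply, wpHom_seq_apply]
    rw [linear_diff, mul_add]
  | seq S₁ S₂ ih₁ ih₂ =>
    intro X
    simp only [Taux, wpHom_seq_apply]
    rw [ih₂, ih₁]
  | prob p hp S₁ S₂ ih₁ ih₂ =>
    intro X
    funext σ
    simp only [Taux, wpHom_prob_apply]
    rw [ih₁, ih₂]
    ring
  | ifte b S₁ S₂ ih₁ ih₂ =>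
    intro X
    funext σ
    simp only [Taux, wpHom_ifte_apply]
    rw [ih₁, ih₂]
    split <;> rfl
  | loop b S ih =>
    intro X
    simp only [Taux]
    apply le_antisymm
    · apply wpHom_loop_le
      intro σ
      rw [ih]
      conv_rhs => rw [wpHom_loop_unfold]
      split <;> exact le_rfl
    · by_cases hα : α = 0
      · intro σ
        simp [hα]
      · have h0 : (α : ℝ≥0∞) ≠ 0 := by simpa using hα
        have ht : (α : ℝ≥0∞) ≠ ⊤ := ENNReal.coe_ne_top
        have hc : ∀ y : ℝ≥0∞, (α : ℝ≥0∞) * ((α : ℝ≥0∞)⁻¹ * y) = y := fun y => by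
          rw [← mul_assoc, ENNReal.mul_inv_cancel h0 ht, one_mul]
        generalize hY : wpHom (.loop b (Taux τ (fun x => α * f x + β) S))
          (fun σ => α * X σ) = Y
        have hle : wpHom (.loop b (Taux τ f S)) X ≤ fun σ => (α : ℝ≥0∞)⁻¹ * Y σ := by
          apply wpHom_loop_le
          intro σ
          have h1 := wpHom_loop_unfold b (Taux τ (fun x => α * f x + β) S)
            (fun σ => α * X σ) σ
          rw [hY] at h1
          have h2 := ih (fun σ => (α : ℝ≥0∞)⁻¹ * Y σ)
          simp only [hc] at h2
          have h3 : (fun σ => Y σ) = Y := rfl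
          rw [h3] at h2
          rw [h2] at h1
          rw [← ENNReal.mul_le_mul_iff_right h0 ht, hc, h1]
          split <;> exact le_rfl
        intro σ
        calc (α : ℝ≥0∞) * wpHom (.loop b (Taux τ f S)) X σ
            ≤ α * ((α : ℝ≥0∞)⁻¹ * Y σ) := by gcongr; exact hle σ
          _ = Y σ := hc _

/-- Linearity of the reward program transformation:
`wp[T_{α·f+β}(S)](0) = α·wp[T_f(S)](0) + β` for `α, β ∈ ℝ≥0`. -/
theorem wp_Tfull_linear (S : pGCL V) (f : ℝ≥0∞ → ℝ≥0∞) (hf : Monotone f)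
    (τ : V) (hτ : NotOccurs τ S) (α β : NNReal) :
    wp (Tfull τ (fun x => α * f x + β) S) 0
      = fun σ => α * wp (Tfull τ f S) 0 σ + β := by
  have h := wpHom_Taux_linear τ f α β S 0
  have h0 : (fun σ => (α : ℝ≥0∞) * (0 : Expct V) σ) = 0 := by
    funext σ
    simp
  rw [h0] at h
  funext σ
  simp only [wp, Tfull, wpHom_assign_apply, wpHom_reward_apply, wpHom_seq_apply]
  rw [h]
  ring
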